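/- Let 𝒜 be an abelian category in which every object has finite length. (1) If every simple object of 𝒜 admits a nonzero morphism to an injective object of 𝒜, then 𝒜 has enough injectives (every object admits a monomorphism into an injective object). (2) If every simple object of 𝒜 admits a nonzero morphism from a projective object of 𝒜, then 𝒜 has enough projectives (every object admits an epimorphism from a projective object). -/

import Mathlib

open CategoryTheory CategoryTheory.Limits

universe v u

/-- An object of an abelian category has finite length if it admits a finite composition
series, i.e. it is zero or an extension of a simple object by an object of finite length. -/
inductive HasFiniteLength {C : Type u} [Category.{v} C] [Abelian C] : C → Prop
  | of_isZero {X : C} (h : IsZero X) : HasFiniteLength X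
  | step {X S : C} (g : X ⟶ S) (hg : Epi g) (hS : Simple S)
      (h : HasFiniteLength (kernel g)) : HasFiniteLength X

/-!
Having a monomorphism into an injective object is stable under extensions: given
`0 ⟶ X₁ ⟶ X₂ ⟶ X₃ ⟶ 0` with embeddings `X₁ ⟶ I` and `X₃ ⟶ J` into injectives, the first one
extends to `X₂ ⟶ I`, and `X₂ ⟶ I ⊞ J` is again a monomorphism. A nonzero morphism out of a simple
object is already a monomorphism, so the property spreads from the simple objects to all objects
of finite length. The projective case is dual.
-/

section Preadditive

variable {C : Type u} [Category.{v} C] [Preadditive C] [Balanced C]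

lemma mono_biprod_lift_of_exact {S : ShortComplex C} (hS : S.Exact) {I J : C}
    [HasBinaryBiproduct I J] (i : S.X₂ ⟶ I) (j : S.X₃ ⟶ J) [Mono (S.f ≫ i)] [Mono j] :
    Mono (biprod.lift i (S.g ≫ j)) := by
  let φ : S ⟶ ShortComplex.mk (biprod.inl : I ⟶ I ⊞ J) biprod.snd (by simp) :=
    { τ₁ := S.f ≫ i
      τ₂ := biprod.lift i (S.g ≫ j)
      τ₃ := j
      comm₁₂ := by ext <;> simp }
  have : Mono S.f := mono_of_mono S.f i
  exact ShortComplex.mono_τ₂_of_exact_of_mono φ hS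

lemma epi_biprod_desc_of_exact {S : ShortComplex C} (hS : S.Exact) {P Q : C}
    [HasBinaryBiproduct P Q] (p : P ⟶ S.X₁) (q : Q ⟶ S.X₂) [Epi p] [Epi (q ≫ S.g)] :
    Epi (biprod.desc (p ≫ S.f) q) := by
  let φ : ShortComplex.mk (biprod.inl : P ⟶ P ⊞ Q) biprod.snd (by simp) ⟶ S :=
    { τ₁ := p
      τ₂ := biprod.desc (p ≫ S.f) q
      τ₃ := q ≫ S.g
      comm₂₃ := by ext <;> simp }
  have : Epi S.g := epi_of_epi q S.g
  exact ShortComplex.epi_τ₂_of_exact_of_epi φ hS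

end Preadditive

section Presentations

variable (C : Type u) [Category.{v} C]

/-- The property of admitting a monomorphism into an injective object, as an `ObjectProperty` so
that closure under extensions can be expressed by `ObjectProperty.IsClosedUnderExtensions`. -/
def hasInjectivePresentation : ObjectProperty C :=
  fun X => Nonempty (InjectivePresentation X)

/-- The property of admitting an epimorphism from a projective object, as an `ObjectProperty` so
that closure under extensions can be expressed by `ObjectProperty.IsClosedUnderExtensions`. -/
def hasProjectivePresentation : ObjectProperty C :=
  fun X => Nonempty (ProjectivePresentation X)

variable {C}

lemma hasInjectivePresentation_of_injective (X : C) [Injective X] :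
    hasInjectivePresentation C X :=
  ⟨{ J := X, f := 𝟙 X }⟩

lemma hasProjectivePresentation_of_projective (X : C) [Projective X] :
    hasProjectivePresentation C X :=
  ⟨{ p := X, f := 𝟙 X }⟩

lemma hasProjectivePresentation_of_nonzero_to_simple [HasZeroMorphisms C] [HasEqualizers C]
    {S P : C} [Simple S] [Projective P] {f : P ⟶ S} [HasImage f] (hf : f ≠ 0) :
    hasProjectivePresentation C S :=
  ⟨{ p := P, f := f, epi := epi_of_nonzero_to_simple hf }⟩

variable [Preadditive C]

lemma hasInjectivePresentation_of_nonzero_from_simple [HasKernels C] {S I : C}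
    [Simple S] [Injective I] {f : S ⟶ I} (hf : f ≠ 0) : hasInjectivePresentation C S :=
  ⟨{ J := I, f := f, mono := mono_of_nonzero_from_simple hf }⟩

instance [Balanced C] [HasBinaryBiproducts C] :
    (hasInjectivePresentation C).IsClosedUnderExtensions where
  prop_X₂_of_shortExact {S} hS := by
    rintro ⟨⟨I, _, i, _⟩⟩ ⟨⟨J, _, j, _⟩⟩
    have := hS.mono_f
    let i' : S.X₂ ⟶ I := Injective.factorThru i S.f
    have : Mono (S.f ≫ i') := by rwa [Injective.comp_factorThru]
    have := mono_biprod_lift_of_exact hS.exact i' j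
    exact ⟨{ J := I ⊞ J, f := biprod.lift i' (S.g ≫ j) }⟩

instance [Balanced C] [HasBinaryBiproducts C] :
    (hasProjectivePresentation C).IsClosedUnderExtensions where
  prop_X₂_of_shortExact {S} hS := by
    rintro ⟨⟨P, p⟩⟩ ⟨⟨Q, q⟩⟩
    have := hS.epi_g
    let q' : Q ⟶ S.X₂ := Projective.factorThru q S.g
    have : Epi (q' ≫ S.g) := by rwa [Projective.factorThru_comp]
    have := epi_biprod_desc_of_exact hS.exact p q'
    exact ⟨{ p := P ⊞ Q, f := biprod.desc (p ≫ S.f) q' }⟩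

end Presentations

lemma HasFiniteLength.prop_of_isClosedUnderExtensions {C : Type u} [Category.{v} C] [Abelian C]
    (P : ObjectProperty C) [P.IsClosedUnderExtensions] (hzero : ∀ X, IsZero X → P X)
    (hsimple : ∀ S, Simple S → P S) {X : C} (hX : HasFiniteLength X) : P X := by
  induction hX with
  | of_isZero h => exact hzero _ h
  | @step X S g _ hS _ ih =>
    have hg : (ShortComplex.mk (kernel.ι g) g (kernel.condition g)).ShortExact :=
      { exact := ShortComplex.exact_kernel g }
    exact P.prop_X₂_of_shortExact hg ih (hsimple S hS)

theorem enoughInjectives_and_enoughProjectives_of_finiteLength_general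
    {C : Type u} [Category.{v} C] [Abelian C] :
    ((∀ S : C, Simple S → ∃ (I : C) (f : S ⟶ I), Injective I ∧ f ≠ 0) →
      ∀ X : C, HasFiniteLength X → Nonempty (InjectivePresentation X)) ∧
    ((∀ S : C, Simple S → ∃ (P : C) (f : P ⟶ S), Projective P ∧ f ≠ 0) →
      ∀ X : C, HasFiniteLength X → Nonempty (ProjectivePresentation X)) := by
  refine ⟨fun h _ hX => ?_, fun h _ hX => ?_⟩
  · refine hX.prop_of_isClosedUnderExtensions (hasInjectivePresentation C)
      (fun X hzero => have := hzero.injective; hasInjectivePresentation_of_injective X)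
      fun S hS => ?_
    obtain ⟨I, f, _, hf⟩ := h S hS
    exact hasInjectivePresentation_of_nonzero_from_simple hf
  · refine hX.prop_of_isClosedUnderExtensions (hasProjectivePresentation C)
      (fun X hzero => have := hzero.projective; hasProjectivePresentation_of_projective X)
      fun S hS => ?_
    obtain ⟨P, f, _, hf⟩ := h S hS
    exact hasProjectivePresentation_of_nonzero_to_simple hf

/-- Lemma: in an abelian category in which every object has finite length, if every simple
object admits a nonzero morphism to an injective object then there are enough injectives,
and if every simple object admits a nonzero morphism from a projective object then there are
enough projectives. -/
theorem enoughInjectives_and_enoughProjectives_of_finiteLength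
    {C : Type u} [Category.{v} C] [Abelian C]
    (hlen : ∀ X : C, HasFiniteLength X) :
    ((∀ S : C, Simple S → ∃ (I : C) (f : S ⟶ I), Injective I ∧ f ≠ 0) →
      EnoughInjectives C) ∧
    ((∀ S : C, Simple S → ∃ (P : C) (f : P ⟶ S), Projective P ∧ f ≠ 0) →
      EnoughProjectives C) :=
  have ⟨injective, projective⟩ :=
    enoughInjectives_and_enoughProjectives_of_finiteLength_general (C := C)
  ⟨fun h => ⟨fun X => injective h X (hlen X)⟩, fun h => ⟨fun X => projective h X (hlen X)⟩⟩
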